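/- arXiv:2505.23222 — 2 statements merged into one kernel-verified Lean document; each statement's English description precedes it below -/
import Mathlib

section
/- Energy dissipation identity for the nonlocal Allen–Cahn equation: the function t ↦ E^ε(t) is differentiable on (0,T) and satisfies, for every t ∈ (0,T), d/dt E^ε(t) = −ε ∫_Q (∂ₜφ(x,t))² dx. -/
open MeasureTheory Real Function
open scoped RealInnerProductSpace

noncomputable section

abbrev Euc (d : ℕ) := EuclideanSpace ℝ (Fin d)

/-- The double-well potential `W(s) = (1-s²)²/2`. -/
def W (s : ℝ) : ℝ := (1 - s ^ 2) ^ 2 / 2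

/-- Its derivative `W'(s) = -2s(1-s²)`. -/
def Wp (s : ℝ) : ℝ := -2 * s * (1 - s ^ 2)

/-- `k(s) = ∫₀ˢ √(2W(r)) dr`. -/
def kfun (s : ℝ) : ℝ := ∫ r in (0:ℝ)..s, Real.sqrt (2 * W r)

/-- The unit cell `Q = [0,1)^d`. -/
def Qcell (d : ℕ) : Set (Euc d) := {x | ∀ i, x i ∈ Set.Ico (0:ℝ) 1}

/-- The Laplacian (sum of second partial derivatives). -/
def lap {d : ℕ} (f : Euc d → ℝ) (x : Euc d) : ℝ :=
  ∑ i : Fin d, fderiv ℝ (fun y => fderiv ℝ f y (EuclideanSpace.single i 1)) x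
    (EuclideanSpace.single i 1)

/-- The total energy `E^ε(t) = E_S^ε(t) + E_P^ε(t)`. -/
def Eeps (d : ℕ) (ε α : ℝ) (φ : Euc d → ℝ → ℝ) (lam : ℝ → ℝ) (t : ℝ) : ℝ :=
  (∫ x in Qcell d, (ε * ‖gradient (fun y => φ y t) x‖ ^ 2 / 2 + W (φ x t) / ε)) +
    ε ^ α / 2 * lam t ^ 2

/-- The compact closed cell. -/
def Kcell (d : ℕ) : Set (Euc d) := (WithLp.ofLp) ⁻¹' (Set.Icc (0 : Fin d → ℝ) 1)

lemma Kcell_compact (d : ℕ) : IsCompact (Kcell d) := by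
  have : Kcell d = (PiLp.continuousLinearEquiv 2 ℝ (fun _ : Fin d => ℝ)).symm ''
      (Set.Icc (0 : Fin d → ℝ) 1) := by
    rw [ContinuousLinearEquiv.image_symm_eq_preimage]; rfl
  rw [this]
  exact isCompact_Icc.image (ContinuousLinearEquiv.continuous _)

lemma Qcell_sub (d : ℕ) : Qcell d ⊆ Kcell d := by
  intro x hx
  exact ⟨fun i => (hx i).1, fun i => (hx i).2.le⟩

lemma Qcell_pre (d : ℕ) : Qcell d =
    (WithLp.ofLp) ⁻¹' (Set.pi Set.univ fun _ : Fin d => Set.Ico (0:ℝ) 1) := by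
  ext x; simp [Qcell]

lemma Qcell_meas (d : ℕ) : MeasurableSet (Qcell d) := by
  rw [Qcell_pre]
  exact (PiLp.volume_preserving_ofLp (Fin d)).measurable
    (MeasurableSet.univ_pi fun _ => measurableSet_Ico)

lemma cont_int {d : ℕ} {f : Euc d → ℝ} (hf : Continuous f) : IntegrableOn f (Qcell d) :=
  (hf.continuousOn.integrableOn_compact (Kcell_compact d)).mono_set (Qcell_sub d)

lemma integral_cell {d : ℕ} (f : Euc d → ℝ) :
    ∫ x in Qcell d, f x = ∫ y in Set.Icc (0 : Fin d → ℝ) 1, f (WithLp.toLp 2 y) := by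
  rw [volume_pi, ← setIntegral_congr_set (Measure.univ_pi_Ico_ae_eq_Icc (f := (0 : Fin d → ℝ)) (g := 1)),
    ← volume_pi, ← (PiLp.volume_preserving_ofLp (Fin d)).setIntegral_preimage_emb
      (MeasurableEquiv.toLp 2 (Fin d → ℝ)).symm.measurableEmbedding]
  simp [Qcell_pre]

lemma diff_int {d : ℕ} (G G' : Euc d → ℝ → ℝ) (hG : Continuous (uncurry G))
    (hG' : Continuous (uncurry G')) (h : ∀ x t, HasDerivAt (G x) (G' x t) t) (t : ℝ) :
    HasDerivAt (fun t => ∫ x in Qcell d, G x t) (∫ x in Qcell d, G' x t) t := by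
  have hc : ∀ t, Continuous fun x => G x t := fun t => hG.comp (by fun_prop : Continuous fun x => (x, t))
  have hc' : ∀ t, Continuous fun x => G' x t :=
    fun t => hG'.comp (by fun_prop : Continuous fun x => (x, t))
  obtain ⟨C, hC⟩ := ((Kcell_compact d).prod (isCompact_closedBall t 1)).exists_bound_of_continuousOn
    hG'.continuousOn
  refine (hasDerivAt_integral_of_dominated_loc_of_deriv_le (F := fun t x => G x t)
    (F' := fun t x => G' x t) (bound := fun _ => C) (Metric.closedBall_mem_nhds t one_pos)
    (Filter.Eventually.of_forall fun s => (hc s).aestronglyMeasurable) (cont_int (hc t))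
    (hc' t).aestronglyMeasurable ?_ (cont_int continuous_const) ?_).2
  · filter_upwards [ae_restrict_mem (Qcell_meas d)] with x hx s hs
    exact hC (x, s) ⟨Qcell_sub d hx, hs⟩
  · exact Filter.Eventually.of_forall fun x s _ => h x s

lemma divergence_zero {d : ℕ} (F : Fin d → Euc d → ℝ) (hF : ∀ i, ContDiff ℝ 1 (F i))
    (hp : ∀ i x, F i (x + EuclideanSpace.single i 1) = F i x) :
    ∫ x in Qcell d, ∑ i, fderiv ℝ (F i) x (EuclideanSpace.single i 1) = 0 := by
  rcases d with _ | n
  · simp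
  rw [integral_cell]
  let L := (PiLp.continuousLinearEquiv 2 ℝ (fun _ : Fin (n+1) => ℝ)).symm
  have key := integral_divergence_of_hasFDerivAt_off_countable' (0 : Fin (n+1) → ℝ) 1
    zero_le_one (fun i y => F i (L y))
    (fun i y => (fderiv ℝ (F i) (L y)).comp (L : (Fin (n+1) → ℝ) →L[ℝ] Euc (n+1))) ∅
    Set.countable_empty (fun i => ((hF i).continuous.comp L.continuous).continuousOn)
    (fun y _ i => (((hF i).differentiable one_ne_zero (L y)).hasFDerivAt).comp y L.hasFDerivAt)
    (by
      apply ContinuousOn.integrableOn_compact isCompact_Icc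
      apply Continuous.continuousOn
      apply continuous_finset_sum
      intro i _
      have := ((hF i).continuous_fderiv one_ne_zero).comp L.continuous
      exact this.clm_apply continuous_const)
  have e1 : (∫ y in Set.Icc (0 : Fin (n+1) → ℝ) 1,
      ∑ i, fderiv ℝ (F i) (WithLp.toLp 2 y) (EuclideanSpace.single i 1)) =
      ∫ y in Set.Icc (0 : Fin (n+1) → ℝ) 1,
      ∑ i, ((fderiv ℝ (F i) (L y)).comp (L : (Fin (n+1) → ℝ) →L[ℝ] Euc (n+1))) (Pi.single i 1) := by
    rfl
  rw [e1, key]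
  apply Finset.sum_eq_zero
  intro i _
  rw [sub_eq_zero]
  congr 1
  ext y
  have : L (i.insertNth ((1 : Fin (n+1) → ℝ) i) y) =
      L (i.insertNth ((0 : Fin (n+1) → ℝ) i) y) + EuclideanSpace.single i 1 := by
    ext j
    refine Fin.succAboveCases i ?_ (fun k => ?_) j <;>
    simp [L]
  rw [this, hp]

lemma W_deriv (s : ℝ) : HasDerivAt W (Wp s) s := by
  have := ((((hasDerivAt_id s).pow 2).const_sub 1).pow 2).div_const 2
  refine HasDerivAt.congr_deriv (f := W) this ?_
  simp only [Wp, id]; norm_num; ring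

lemma W_cont : Continuous W := by unfold W; fun_prop
lemma Wp_cont : Continuous Wp := by unfold Wp; fun_prop
lemma sW_cont : Continuous fun s => √(2 * W s) := by have := W_cont; fun_prop

lemma k_deriv (s : ℝ) : HasDerivAt kfun (√(2 * W s)) s :=
  intervalIntegral.integral_hasDerivAt_right (sW_cont.intervalIntegrable _ _)
    (sW_cont.stronglyMeasurableAtFilter _ _) sW_cont.continuousAt

lemma k_cont : Continuous kfun :=
  continuous_iff_continuousAt.2 fun s => (k_deriv s).continuousAt

/-- Directional derivative. -/
def DD {d : ℕ} (v : Euc d × ℝ) (f : Euc d × ℝ → ℝ) (p : Euc d × ℝ) : ℝ := fderiv ℝ f p v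

lemma DD_smooth {d : ℕ} (v : Euc d × ℝ) {f : Euc d × ℝ → ℝ} (hf : ContDiff ℝ (⊤ : ℕ∞) f) :
    ContDiff ℝ (⊤ : ℕ∞) (DD v f) := by
  unfold DD
  exact (hf.fderiv_right (m := (⊤ : ℕ∞)) (by simp)).clm_apply contDiff_const

lemma DD_comm {d : ℕ} (v w : Euc d × ℝ) {f : Euc d × ℝ → ℝ} (hf : ContDiff ℝ (⊤ : ℕ∞) f) 
    (p : Euc d × ℝ) : DD v (DD w f) p = DD w (DD v f) p := by
  have hd : DifferentiableAt ℝ (fderiv ℝ f) p :=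
    (hf.fderiv_right (m := (⊤ : ℕ∞)) (by simp)).differentiable (by simp) p
  have hs : IsSymmSndFDerivAt ℝ f p := hf.contDiffAt.isSymmSndFDerivAt (by
    simp only [minSmoothness_of_isRCLikeNormedField]
    exact WithTop.coe_le_coe.2 (le_top : (2 : ℕ∞) ≤ ⊤))
  have e : ∀ v w : Euc d × ℝ, DD v (DD w f) p = fderiv ℝ (fderiv ℝ f) p v w := by
    intro v w
    unfold DD
    rw [fderiv_clm_apply hd (by fun_prop)]
    simp
  rw [e, e]; exact hs v w

lemma DD_t {d : ℕ} {f : Euc d × ℝ → ℝ} (hf : ContDiff ℝ (⊤ : ℕ∞) f) (x : Euc d) (t : ℝ) :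
    HasDerivAt (fun s => f (x, s)) (DD (0, 1) f (x, t)) t := by
  have h1 : HasDerivAt (fun s : ℝ => (x, s)) ((0 : Euc d), (1:ℝ)) t :=
    (hasDerivAt_const t x).prodMk (hasDerivAt_id t)
  exact ((hf.differentiable (by simp) (x, t)).hasFDerivAt).comp_hasDerivAt t h1

lemma DD_x {d : ℕ} {f : Euc d × ℝ → ℝ} (hf : ContDiff ℝ (⊤ : ℕ∞) f) (x : Euc d) (t : ℝ) (v : Euc d) :
    fderiv ℝ (fun y => f (y, t)) x v = DD (v, 0) f (x, t) := by
  have h1 : HasFDerivAt (fun y : Euc d => (y, t)) (ContinuousLinearMap.inl ℝ (Euc d) ℝ) x :=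
    hasFDerivAt_prodMk_left x t
  have := ((hf.differentiable (by simp) (x, t)).hasFDerivAt).comp x h1
  have h2 := this.fderiv
  simp only [Function.comp_def] at h2
  rw [h2]; simp [DD]

lemma DD_per {d : ℕ} {f : Euc d × ℝ → ℝ} {a : Euc d × ℝ} (h : ∀ p, f (p + a) = f p)
    (v : Euc d × ℝ) (p : Euc d × ℝ) : DD v f (p + a) = DD v f p := by
  unfold DD
  rw [← fderiv_comp_add_right]
  simp [h]

lemma grad_sq {d : ℕ} (f : Euc d → ℝ) (x : Euc d) :
    ‖gradient f x‖ ^ 2 = ∑ i, (fderiv ℝ f x (EuclideanSpace.single i 1)) ^ 2 := by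
  rw [EuclideanSpace.norm_sq_eq]
  refine Finset.sum_congr rfl fun i _ => ?_
  rw [← toDual_gradient, InnerProductSpace.toDual_apply_apply, EuclideanSpace.inner_single_right]
  simp

set_option maxHeartbeats 1000000 in
/-- energy dissipation identity for the nonlocal Allen–Cahn equation. -/
theorem stmt0 (d : ℕ) (hd : 2 ≤ d) (T ε α : ℝ) (hT : 0 < T) (hε : 0 < ε)
    (hα : α ∈ Set.Ioo (0:ℝ) 1)
    (φ : Euc d → ℝ → ℝ)
    (hφ : ContDiff ℝ (⊤ : ℕ∞) (Function.uncurry φ))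
    (hper : ∀ (x : Euc d) (z : Fin d → ℤ) (t : ℝ), φ (x + (WithLp.equiv 2 (Fin d → ℝ)).symm fun i => (z i : ℝ)) t = φ x t)
    (lam : ℝ → ℝ)
    (hlam : ∀ t, lam t = ε ^ (-α) *
      ((∫ x in Qcell d, kfun (φ x 0)) - (∫ x in Qcell d, kfun (φ x t))))
    (hPDE : ∀ (x : Euc d), ∀ t ∈ Set.Ioo (0:ℝ) T,
      ε * deriv (φ x) t =
        ε * lap (fun y => φ y t) x - Wp (φ x t) / ε + lam t * Real.sqrt (2 * W (φ x t))) :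
    ∀ t ∈ Set.Ioo (0:ℝ) T,
      HasDerivAt (Eeps d ε α φ lam)
        (-ε * ∫ x in Qcell d, (deriv (φ x) t) ^ 2) t := by
  intro t ht
  have hp : ∀ (i : Fin d) (p : Euc d × ℝ),
      uncurry φ (p + (EuclideanSpace.single i 1, 0)) = uncurry φ p := by
    rintro i ⟨x, s⟩
    have h := hper x (Pi.single i 1) s
    have e : (WithLp.equiv 2 (Fin d → ℝ)).symm (fun j => ((Pi.single i 1 : Fin d → ℤ) j : ℝ)) =
        EuclideanSpace.single i (1:ℝ) := by
      ext j
      by_cases hj : j = i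
      · subst hj; simp
      · simp [hj]
    rw [e] at h
    simpa [uncurry] using h
  have hgrad : ∀ s x, ‖gradient (fun y => φ y s) x‖ ^ 2 =
      ∑ i, (DD (EuclideanSpace.single i 1, 0) (uncurry φ) (x, s)) ^ 2 := by
    intro s x
    rw [grad_sq]
    exact Finset.sum_congr rfl fun i _ => by rw [← DD_x hφ]; rfl
  have hlap : ∀ x, lap (fun y => φ y t) x = ∑ i, DD (EuclideanSpace.single i 1, 0)
      (DD (EuclideanSpace.single i 1, 0) (uncurry φ)) (x, t) := by
    intro x
    unfold lap
    refine Finset.sum_congr rfl fun i _ => ?_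
    rw [← DD_x (DD_smooth _ hφ)]
    congr 2
    ext y
    exact DD_x hφ y t _
  have hdt : ∀ x s, HasDerivAt (φ x) (DD (0, 1) (uncurry φ) (x, s)) s := fun x s => DD_t hφ x s
  have cφ : Continuous (uncurry φ) := hφ.continuous
  have cD : ∀ v, Continuous (DD v (uncurry φ)) := fun v => (DD_smooth v hφ).continuous
  have cDD : ∀ v w, Continuous (DD w (DD v (uncurry φ))) :=
    fun v w => (DD_smooth w (DD_smooth v hφ)).continuous
  have cW := W_cont
  have cWp := Wp_cont
  have cs := sW_cont
  have ck := k_cont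
  have cx : Continuous fun x : Euc d => (x, t) := by fun_prop
  -- derivative of the surface energy
  have hS := diff_int (d := d)
    (fun x s => ε * (∑ i, (DD (EuclideanSpace.single i 1, 0) (uncurry φ) (x, s)) ^ 2) / 2
      + W (φ x s) / ε)
    (fun x s => ε * (∑ i, DD (0, 1) (DD (EuclideanSpace.single i 1, 0) (uncurry φ)) (x, s) *
      DD (EuclideanSpace.single i 1, 0) (uncurry φ) (x, s))
      + Wp (φ x s) * DD (0, 1) (uncurry φ) (x, s) / ε)
    (by
      have : Continuous fun p : Euc d × ℝ => ε * (∑ i, (DD (EuclideanSpace.single i 1, 0) (uncurry φ) p) ^ 2) / 2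
          + W (uncurry φ p) / ε := by fun_prop
      exact this)
    (by
      have : Continuous fun p : Euc d × ℝ => ε * (∑ i, DD (0, 1) (DD (EuclideanSpace.single i 1, 0) (uncurry φ)) p *
      DD (EuclideanSpace.single i 1, 0) (uncurry φ) p)
      + Wp (uncurry φ p) * DD (0, 1) (uncurry φ) p / ε := by fun_prop
      exact this)
    (by
      intro x s
      have h1 := HasDerivAt.fun_sum (u := Finset.univ) fun (i : Fin d) _ =>
        (DD_t (DD_smooth (EuclideanSpace.single i 1, 0) hφ) x s).pow 2
      have h2 := ((W_deriv (φ x s)).comp s (hdt x s)).div_const ε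
      refine (((h1.const_mul ε).div_const 2).add h2).congr_deriv ?_
      congr 1
      rw [mul_div_assoc, Finset.sum_div]
      congr 1
      refine Finset.sum_congr rfl fun i _ => ?_
      norm_num
      ring) t
  have hK := diff_int (d := d) (fun x s => kfun (φ x s))
    (fun x s => √(2 * W (φ x s)) * DD (0, 1) (uncurry φ) (x, s))
    (ck.comp cφ) ((cs.comp cφ).mul (cD _))
    (fun x s => (k_deriv (φ x s)).comp s (hdt x s)) t
  have hL : HasDerivAt lam (ε ^ (-α) *
      (0 - ∫ x in Qcell d, √(2 * W (φ x t)) * DD (0, 1) (uncurry φ) (x, t))) t := by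
    have := ((hasDerivAt_const t (∫ x in Qcell d, kfun (φ x 0))).sub hK).const_mul (ε ^ (-α))
    rw [funext hlam]
    exact this
  have hdiv := divergence_zero (d := d)
    (fun i y => DD (0, 1) (uncurry φ) (y, t) * DD (EuclideanSpace.single i 1, 0) (uncurry φ) (y, t))
    (fun i => by
      have h := ((DD_smooth (0, 1) hφ).mul (DD_smooth (EuclideanSpace.single i 1, 0) hφ)).comp
        (contDiff_prodMk_left t)
      exact h.of_le (by exact_mod_cast le_top))
    (fun i x => by
      have h1 := DD_per (hp i) (0, 1) (x, t)
      have h2 := DD_per (hp i) (EuclideanSpace.single i 1, 0) (x, t)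
      simp only [Prod.mk_add_mk, add_zero] at h1 h2
      rw [h1, h2])
  have hdiv' : ∀ x (i : Fin d), fderiv ℝ (fun y => DD (0, 1) (uncurry φ) (y, t) *
      DD (EuclideanSpace.single i 1, 0) (uncurry φ) (y, t)) x (EuclideanSpace.single i 1) =
      DD (0, 1) (DD (EuclideanSpace.single i 1, 0) (uncurry φ)) (x, t) *
      DD (EuclideanSpace.single i 1, 0) (uncurry φ) (x, t) + DD (0, 1) (uncurry φ) (x, t) *
      DD (EuclideanSpace.single i 1, 0) (DD (EuclideanSpace.single i 1, 0) (uncurry φ)) (x, t) := by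
    intro x i
    have hs : ∀ v, DifferentiableAt ℝ (fun y => DD v (uncurry φ) (y, t)) x := fun v =>
      ((DD_smooth v hφ).comp (contDiff_prodMk_left t)).differentiable (by simp) x
    rw [fderiv_fun_mul (hs _) (hs _)]
    simp only [ContinuousLinearMap.add_apply, ContinuousLinearMap.smul_apply, smul_eq_mul]
    rw [DD_x (DD_smooth _ hφ), DD_x (DD_smooth _ hφ), DD_comm (0, 1) _ hφ]
    ring
  simp only [hdiv'] at hdiv
  have hE : Eeps d ε α φ lam = fun s => (∫ x in Qcell d,
      (ε * (∑ i, (DD (EuclideanSpace.single i 1, 0) (uncurry φ) (x, s)) ^ 2) / 2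
      + W (φ x s) / ε)) + ε ^ α / 2 * lam s ^ 2 := by
    ext s
    simp only [Eeps, hgrad]
  rw [hE]
  refine (hS.add ((hL.pow 2).const_mul (ε ^ α / 2))).congr_deriv ?_
  have hεα : ε ^ α * ε ^ (-α) = 1 := by
    rw [← Real.rpow_add hε]; simp
  have hI : ∀ c : ℝ, ε ^ α / 2 * (((2 : ℕ) : ℝ) * lam t ^ (2 - 1) * (ε ^ (-α) * (0 - c))) =
      - (lam t * c) := by
    intro c
    norm_num
    linear_combination (lam t * c) * hεα
  rw [hI, ← integral_const_mul (lam t), ← integral_const_mul (-ε), ← sub_eq_add_neg, ← integral_sub]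
  rotate_left
  · apply cont_int
    have : Continuous fun p : Euc d × ℝ => ε * (∑ i, DD (0, 1) (DD (EuclideanSpace.single i 1, 0) (uncurry φ)) p *
      DD (EuclideanSpace.single i 1, 0) (uncurry φ) p)
      + Wp (uncurry φ p) * DD (0, 1) (uncurry φ) p / ε := by fun_prop
    exact this.comp cx
  · apply cont_int
    have : Continuous fun p : Euc d × ℝ => lam t * (√(2 * W (uncurry φ p)) *
        DD (0, 1) (uncurry φ) p) := continuous_const.mul ((cs.comp cφ).mul (cD _))
    have h2 := this.comp cx
    simp only [Function.comp_def, Function.uncurry_apply_pair] at h2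
    exact h2
  have hmain : ∀ x, (ε * (∑ i, DD (0, 1) (DD (EuclideanSpace.single i 1, 0) (uncurry φ)) (x, t) *
      DD (EuclideanSpace.single i 1, 0) (uncurry φ) (x, t))
      + Wp (φ x t) * DD (0, 1) (uncurry φ) (x, t) / ε) -
      lam t * (√(2 * W (φ x t)) * DD (0, 1) (uncurry φ) (x, t)) =
      -ε * (deriv (φ x) t) ^ 2 + ε * ∑ i : Fin d,
      (DD (0, 1) (DD (EuclideanSpace.single i 1, 0) (uncurry φ)) (x, t) *
      DD (EuclideanSpace.single i 1, 0) (uncurry φ) (x, t) + DD (0, 1) (uncurry φ) (x, t) *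
      DD (EuclideanSpace.single i 1, 0) (DD (EuclideanSpace.single i 1, 0) (uncurry φ)) (x, t)) := by
    intro x
    have h := hPDE x t ht
    rw [hlap] at h
    rw [(hdt x t).deriv] at h ⊢
    rw [Finset.sum_add_distrib, ← Finset.mul_sum]
    linear_combination DD (0, 1) (uncurry φ) (x, t) * h
  simp only [hmain]
  rw [integral_add, integral_const_mul ε, hdiv, mul_zero, add_zero]
  · apply cont_int
    simp only [(hdt _ t).deriv]
    have : Continuous fun p : Euc d × ℝ => -ε * (DD (0, 1) (uncurry φ) p) ^ 2 := by fun_prop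
    exact this.comp cx
  · apply cont_int
    have : Continuous fun p : Euc d × ℝ => ε * ∑ i : Fin d,
      (DD (0, 1) (DD (EuclideanSpace.single i 1, 0) (uncurry φ)) p *
      DD (EuclideanSpace.single i 1, 0) (uncurry φ) p + DD (0, 1) (uncurry φ) p *
      DD (EuclideanSpace.single i 1, 0) (DD (EuclideanSpace.single i 1, 0) (uncurry φ)) p) := by
      fun_prop
    exact this.comp cx
end
end

section
/- Hyperplane test lemma (uniqueness of the normal velocity in the smooth setting): let d ≥ 2, let P ⊂ ℝ^d be a (d−1)-dimensional linear subspace, and let w ∈ ℝ^d be orthogonal to P. If ∫_P ∇φ(x) · w dH^{d−1}(x) ≥ 0 for every nonnegative φ ∈ C¹_c(ℝ^d), then w = 0. -/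
open MeasureTheory Real Function
open scoped RealInnerProductSpace

noncomputable section

lemma aux_deriv (t : ℝ) : HasDerivAt (fun s : ℝ => (max 0 s) ^ 2) (2 * max 0 t) t := by
  rcases lt_trichotomy t 0 with ht | ht | ht
  · rw [max_eq_left ht.le, mul_zero]
    refine (hasDerivAt_const t (0 : ℝ)).congr_of_eventuallyEq ?_
    filter_upwards [eventually_lt_nhds ht] with s hs
    rw [max_eq_left hs.le]; norm_num
  · subst ht
    have : (fun s : ℝ => (max 0 s) ^ 2) =O[nhds 0] fun x => ‖x - 0‖ ^ 2 := by
      refine Asymptotics.IsBigO.of_norm_le fun s => ?_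
      rw [norm_pow, sub_zero]
      refine pow_le_pow_left₀ (norm_nonneg _) ?_ 2
      rw [Real.norm_eq_abs, Real.norm_eq_abs, abs_of_nonneg (le_max_left _ _)]
      exact max_le (abs_nonneg _) (le_abs_self _)
    have h2 := this.hasFDerivAt (𝕜 := ℝ) (by norm_num)
    simpa using h2.hasDerivAt
  · rw [max_eq_right ht.le]
    have h1 : HasDerivAt (fun s : ℝ => s ^ 2) (2 * t) t := by simpa using hasDerivAt_pow 2 t
    refine h1.congr_of_eventuallyEq ?_
    filter_upwards [eventually_gt_nhds ht] with s hs
    rw [max_eq_right hs.le]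

lemma aux_contDiff : ContDiff ℝ 1 (fun s : ℝ => (max 0 s) ^ 2) := by
  rw [contDiff_one_iff_deriv]
  refine ⟨fun t => (aux_deriv t).differentiableAt, ?_⟩
  have : deriv (fun s : ℝ => (max 0 s) ^ 2) = fun t => 2 * max 0 t :=
    funext fun t => (aux_deriv t).deriv
  rw [this]
  fun_prop

/-- hyperplane test lemma (uniqueness of the normal velocity in the
smooth setting). If `P ⊂ ℝ^d` is a `(d-1)`-dimensional linear subspace, `w ⊥ P`,
and `∫_P ∇φ · w dH^{d-1} ≥ 0` for every nonnegative `φ ∈ C¹_c(ℝ^d)`, then `w = 0`. -/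
theorem stmt9 (d : ℕ) (hd : 2 ≤ d) (P : Submodule ℝ (Euc d))
    (hP : Module.finrank ℝ P = d - 1) (w : Euc d) (hw : w ∈ Pᗮ)
    (h : ∀ φ : Euc d → ℝ, ContDiff ℝ 1 φ → HasCompactSupport φ → (∀ x, 0 ≤ φ x) →
      0 ≤ ∫ x in (P : Set (Euc d)), ⟪gradient φ x, w⟫ ∂(μH[((d : ℝ) - 1)])) :
    w = 0 := by
  by_contra hw0
  have hwpos : 0 < ‖w‖ ^ 2 := by positivity
  set R : ℝ := 2 * ‖w‖ ^ 2 with hR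
  set φ : Euc d → ℝ := fun x => (max 0 (R - ‖x + w‖ ^ 2)) ^ 2 with hφ
  have hsupp : ∀ x : Euc d, x ∉ Metric.closedBall (-w) (2 * ‖w‖) → R - ‖x + w‖ ^ 2 ≤ 0 := by
    intro x hx
    rw [Metric.mem_closedBall, dist_eq_norm, sub_neg_eq_add, not_le] at hx
    nlinarith [norm_nonneg w]
  have h1 : ContDiff ℝ 1 φ := by
    have : ContDiff ℝ 1 (fun x : Euc d => R - ‖x + w‖ ^ 2) :=
      contDiff_const.sub ((contDiff_id.add contDiff_const).norm_sq ℝ)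
    exact aux_contDiff.comp this
  have h2 : HasCompactSupport φ := by
    refine HasCompactSupport.intro (isCompact_closedBall (-w) (2 * ‖w‖)) fun x hx => ?_
    simp only [hφ]
    rw [max_eq_left (hsupp x hx)]; norm_num
  have h3 : ∀ x, 0 ≤ φ x := fun x => sq_nonneg _
  have key := h φ h1 h2 h3
  have hgrad : ∀ x : P, ⟪gradient φ (x : Euc d), w⟫
      = -(4 * ‖w‖ ^ 2 * max 0 (R - ‖(x : Euc d) + w‖ ^ 2)) := by
    intro x
    have e1 : ⟪gradient φ (x : Euc d), w⟫ = fderiv ℝ φ x w := by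
      rw [← toDual_gradient]; rfl
    have hn : HasFDerivAt (fun y : Euc d => ‖y + w‖ ^ 2) _ (x : Euc d) :=
      ((hasFDerivAt_id (x : Euc d)).add_const w).norm_sq
    have hc := (aux_deriv _).comp_hasFDerivAt (x : Euc d) (hn.const_sub R)
    have hxw : ⟪(x : Euc d), w⟫ = 0 := hw x x.2
    have e2 : fderiv ℝ φ x = _ := hc.fderiv
    rw [e1, e2]
    simp [inner_add_left, hxw]
    ring
  have hdim : ((d : ℝ) - 1) = (Module.finrank ℝ P : ℝ) := by
    rw [hP, Nat.cast_sub (by omega)]; simp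
  have hiso : Isometry ((↑) : P → Euc d) := isometry_subtype_coe
  have hme : MeasurableEmbedding ((↑) : P → Euc d) :=
    (Submodule.closed_of_finiteDimensional P).isClosedEmbedding_subtypeVal.measurableEmbedding
  have hmap := hiso.map_hausdorffMeasure (d := (Module.finrank ℝ P : ℝ)) (Or.inl (by positivity))
  have hrange : Set.range ((↑) : P → Euc d) = (P : Set (Euc d)) := Subtype.range_coe
  rw [hrange] at hmap
  rw [hdim, ← hmap, hme.integral_map] at key
  simp only [hgrad] at key
  rw [integral_neg] at key
  have hcont : Continuous fun x : P => 4 * ‖w‖ ^ 2 * max 0 (R - ‖(x : Euc d) + w‖ ^ 2) := by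
    fun_prop
  have hcs : HasCompactSupport fun x : P => 4 * ‖w‖ ^ 2 * max 0 (R - ‖(x : Euc d) + w‖ ^ 2) := by
    refine HasCompactSupport.intro (K := ((↑) : P → Euc d) ⁻¹' Metric.closedBall (-w) (2 * ‖w‖))
      ?_ fun x hx => ?_
    · exact (Submodule.closed_of_finiteDimensional P).isClosedEmbedding_subtypeVal.isCompact_preimage
        (isCompact_closedBall _ _)
    · rw [max_eq_left (hsupp x hx), mul_zero]
  have hpos := hcont.integral_pos_of_hasCompactSupport_nonneg_nonzero
    (μ := (μH[(Module.finrank ℝ P : ℝ)] : Measure P)) (x := 0) hcs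
    (fun x => by positivity) (by
      have : R - ‖((0 : P) : Euc d) + w‖ ^ 2 = ‖w‖ ^ 2 := by
        rw [hR]; simp; ring
      rw [this, max_eq_right hwpos.le]
      positivity)
  linarith
end
end
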